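/- Given a graph G and an edge e of G, there is a long exact sequence ... → H^{i,j}(G) → H^{i,j}(G−e) → H^{i,j}(G/e) → H^{i+1,j}(G) → ... of graph cohomology groups, categorifying the deletion-contraction rule. -/

import Mathlib

/-- A finite multigraph (possibly with loops and multiple edges), with
vertex type `V` and edges indexed by `Fin n`, edge `e` having endpoints `ends e`. -/
structure OGraph where
  V : Type
  [finV : Fintype V]
  n : ℕ
  ends : Fin n → Sym2 V

attribute [instance] OGraph.finV

namespace OGraph

variable (G : OGraph)

/-- Two vertices are related if some edge in `s` joins them. -/
def rel (s : Finset (Fin G.n)) (u v : G.V) : Prop := ∃ e ∈ s, G.ends e = s(u, v)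

/-- The set of connected components of the spanning subgraph `[G:s]`. -/
def Comp (s : Finset (Fin G.n)) : Type := Quot (G.rel s)

/-- `k(s)`: the number of connected components of the spanning subgraph `[G:s]`. -/
noncomputable def ncomp (s : Finset (Fin G.n)) : ℕ := Nat.card (G.Comp s)

/-- The number of proper colorings of `G` with `m` colors: the value `P_G(m)` of
the chromatic polynomial at the natural number `m`. -/
noncomputable def chromatic (m : ℕ) : ℕ :=
  Nat.card {c : G.V → Fin m // ∀ e u v, G.ends e = s(u, v) → c u ≠ c v}

end OGraph

namespace OGraph

noncomputable instance finiteQuot {V : Type} [Finite V] (r : V → V → Prop) :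
    Fintype (Quot r) :=
  letI : Finite (Quot r) :=
    Finite.of_surjective (Quot.mk r) fun q => Quot.inductionOn q fun v => ⟨v, rfl⟩
  Fintype.ofFinite _

/-- The graph `G − e` obtained from `G` by deleting the edge `e`; the ordering of
the remaining edges is inherited from `G`. -/
def delG (V : Type) [Fintype V] {n : ℕ} (ends : Fin (n + 1) → Sym2 V)
    (e : Fin (n + 1)) : OGraph :=
  ⟨V, n, fun k => ends (e.succAbove k)⟩

/-- The graph `G / e` obtained from `G` by contracting the edge `e` (identifying its
two endpoints and removing `e`); the ordering of the remaining edges is inherited. -/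
noncomputable def ctrG (V : Type) [Fintype V] {n : ℕ} (ends : Fin (n + 1) → Sym2 V)
    (e : Fin (n + 1)) : OGraph :=
  ⟨Quot (fun u v : V => ends e = s(u, v)), n,
    fun k => (ends (e.succAbove k)).map (Quot.mk _)⟩

end OGraph

namespace OGraph

/-- The map on quotients induced by an implication of relations. -/
def qmap {V : Type} {r r' : V → V → Prop} (h : ∀ u v, r u v → r' u v) :
    Quot r → Quot r' :=
  Quot.lift (Quot.mk r') fun u v huv => Quot.sound (h u v huv)

variable (G : OGraph)

/-- An enhanced state: a subset `s` of the edges together with an assignment of a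
color (`1` or `x`; a component is "colored `x`" when the predicate holds) to each
connected component of the spanning subgraph `[G:s]`. -/
abbrev EState := Σ s : Finset (Fin G.n), (G.Comp s → Prop)

/-- `j(S)`: the number of components colored `x` in the enhanced state `S`. -/
noncomputable def jdeg (S : G.EState) : ℕ := Nat.card {k : G.Comp S.1 // S.2 k}

open Classical in
/-- The enhanced state(s) obtained from `S` by adding the edge `e`: zero if `e`
already belongs to `S` or if the added edge merges two components both colored `x`
(the product `x∗x = 0`); otherwise the enhanced state on `insert e s` whose
coloring is obtained from that of `S` using the product
`1∗1 = 1`, `1∗x = x∗1 = x`. -/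
noncomputable def addEdge (S : G.EState) (e : Fin G.n) : G.EState →₀ ℤ :=
  if e ∈ S.1 then 0
  else
    let p : G.Comp S.1 → G.Comp (insert e S.1) :=
      qmap fun _ _ huv => huv.elim fun f hf => ⟨f, Finset.mem_insert_of_mem hf.1, hf.2⟩
    if ∃ k1 k2 : G.Comp S.1, k1 ≠ k2 ∧ p k1 = p k2 ∧ S.2 k1 ∧ S.2 k2 then 0
    else Finsupp.single ⟨insert e S.1, fun K => ∃ k, p k = K ∧ S.2 k⟩ 1

/-- The differential applied to a single enhanced state: the signed sum, over all
edges `e` not in `S`, of the states obtained by adding `e`; the sign is `(-1)^{n(e)}`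
where `n(e)` is the number of edges of `S` ordered before `e`. -/
noncomputable def dState (S : G.EState) : G.EState →₀ ℤ :=
  ∑ e : Fin G.n, ((-1 : ℤ) ^ (S.1.filter fun f => f < e).card) • G.addEdge S e

/-- The differential of the graph cohomology complex, as a linear endomorphism of
the free `ℤ`-module generated by all enhanced states. -/
noncomputable def diff : (G.EState →₀ ℤ) →ₗ[ℤ] (G.EState →₀ ℤ) :=
  Finsupp.lsum ℤ fun S => LinearMap.toSpanSingleton ℤ _ (G.dState S)

/-- The chain group `C^{i,j}(G)`: the free `ℤ`-module spanned by the enhanced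
states with `i` edges and `j` components colored `x`, as a submodule of the free
module on all enhanced states. -/
noncomputable def Cmod (i j : ℕ) : Submodule ℤ (G.EState →₀ ℤ) :=
  Finsupp.supported ℤ ℤ {S : G.EState | S.1.card = i ∧ G.jdeg S = j}

/-- The cocycles of bidegree `(i,j)`. -/
noncomputable def Zmod (i j : ℕ) : Submodule ℤ (G.EState →₀ ℤ) :=
  LinearMap.ker G.diff ⊓ G.Cmod i j

/-- The coboundaries: `0` for `i = 0`, the image of `C^{i,j}` for `i + 1`. -/
noncomputable def Bmod : ℕ → ℕ → Submodule ℤ (G.EState →₀ ℤ)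
  | 0, _ => ⊥
  | i + 1, j => Submodule.map G.diff (G.Cmod i j)

/-- The graph cohomology group `H^{i,j}(G)` (cocycles modulo coboundaries in
bidegree `(i,j)`). -/
noncomputable def Hmod (i j : ℕ) : Type :=
  (G.Zmod i j).toAddSubgroup ⧸
    (AddSubgroup.comap (G.Zmod i j).toAddSubgroup.subtype (G.Bmod i j).toAddSubgroup)

noncomputable instance (i j : ℕ) : AddCommGroup (G.Hmod i j) := by
  delta Hmod; infer_instance

end OGraph

namespace OGraph

section basic
variable (G : OGraph)

def reach (s : Finset (Fin G.n)) (u v : G.V) : Prop :=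
  (Quot.mk (G.rel s) u) = Quot.mk (G.rel s) v

def col (S : G.EState) (v : G.V) : Prop := S.2 (Quot.mk _ v)

def ofPred (t : Finset (Fin G.n)) (P : G.V → Prop) : G.EState :=
  ⟨t, fun K => ∃ v, Quot.mk _ v = K ∧ P v⟩

variable {G}

theorem reach_mono {s t : Finset (Fin G.n)} (h : s ⊆ t) {u v : G.V} (r : G.reach s u v) :
    G.reach t u v :=
  congrArg (qmap (r := G.rel s) (r' := G.rel t)
    (fun _ _ huv => huv.elim fun f hf => ⟨f, h hf.1, hf.2⟩)) r

theorem reach_refl (s : Finset (Fin G.n)) (u : G.V) : G.reach s u u := rfl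

theorem reach_symm {s : Finset (Fin G.n)} {u v : G.V} (h : G.reach s u v) : G.reach s v u :=
  Eq.symm h

theorem reach_trans {s : Finset (Fin G.n)} {u v w : G.V} (h : G.reach s u v)
    (h' : G.reach s v w) : G.reach s u w := Eq.trans h h'

theorem col_ofPred (t : Finset (Fin G.n)) (P : G.V → Prop) (v : G.V) :
    G.col (G.ofPred t P) v ↔ ∃ u, G.reach t u v ∧ P u := Iff.rfl

theorem col_reach (S : G.EState) {u v : G.V} (h : G.reach S.1 u v) (hu : G.col S u) :
    G.col S v := by
  unfold col at *
  unfold reach at h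
  rwa [← h]

theorem estate_ext {S T : G.EState} (h : S.1 = T.1) (h' : ∀ v, G.col S v ↔ G.col T v) :
    S = T := by
  obtain ⟨s, c⟩ := S
  obtain ⟨t, c'⟩ := T
  obtain rfl : s = t := h
  congr 1
  funext K
  induction K using Quot.ind with
  | mk v => exact propext (h' v)

/-- no two distinct coloured components get merged -/
def ok (W : G.EState) (t : Finset (Fin G.n)) : Prop :=
  ∀ u v, G.reach t u v → G.col W u → G.col W v → G.reach W.1 u v

open Classical in
noncomputable def push (W : G.EState) (t : Finset (Fin G.n)) : G.EState →₀ ℤ :=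
  if ok W t then Finsupp.single (G.ofPred t (G.col W)) 1 else 0

theorem addEdge_eq (S : G.EState) (k : Fin G.n) :
    G.addEdge S k = if k ∈ S.1 then 0 else push S (insert k S.1) := by
  classical
  unfold addEdge push
  by_cases h1 : k ∈ S.1
  · rw [if_pos h1, if_pos h1]
  rw [if_neg h1, if_neg h1]
  extract_lets p
  split_ifs with h2 h3 h3
  · exfalso
    obtain ⟨k1, k2, hne, hp, c1, c2⟩ := h2
    induction k1 using Quot.ind with
    | mk u =>
      induction k2 using Quot.ind with
      | mk v => exact hne (h3 u v hp c1 c2)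
  · rfl
  · congr 1
    refine estate_ext rfl fun v => ?_
    constructor
    · rintro ⟨K, hK, hc⟩
      induction K using Quot.ind with
      | mk u => exact ⟨u, hK, hc⟩
    · rintro ⟨u, hu, hc⟩
      exact ⟨Quot.mk _ u, hu, hc⟩
  · exfalso
    apply h3
    intro u v huv hu hv
    by_contra hne
    exact h2 ⟨Quot.mk _ u, Quot.mk _ v, hne, huv, hu, hv⟩

theorem addEdge_pos {S : G.EState} {k : Fin G.n} (h : k ∈ S.1) : G.addEdge S k = 0 := by
  rw [addEdge_eq, if_pos h]

theorem addEdge_neg {S : G.EState} {k : Fin G.n} (h : k ∉ S.1) :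
    G.addEdge S k = push S (insert k S.1) := by
  rw [addEdge_eq, if_neg h]

variable (G) in
noncomputable def pk (k : Fin G.n) : (G.EState →₀ ℤ) →ₗ[ℤ] (G.EState →₀ ℤ) :=
  Finsupp.lsum ℤ fun S => LinearMap.toSpanSingleton ℤ _ (push S (insert k S.1))

theorem pk_single (k : Fin G.n) (S : G.EState) :
    G.pk k (Finsupp.single S 1) = push S (insert k S.1) := by
  simp [pk]

theorem diff_single (S : G.EState) : G.diff (Finsupp.single S 1) = G.dState S := by
  simp [diff]

theorem ok_trans {W : G.EState} {t t' : Finset (Fin G.n)} (h : W.1 ⊆ t) (h' : t ⊆ t') :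
    ok W t' ↔ ok W t ∧ ok (G.ofPred t (G.col W)) t' := by
  constructor
  · intro H
    refine ⟨fun u v huv hu hv => H u v (reach_mono h' huv) hu hv, ?_⟩
    rintro u v huv ⟨a, ha, hac⟩ ⟨b, hb, hbc⟩
    have := H a b (reach_trans (reach_mono h' ha) (reach_trans huv (reach_symm (reach_mono h' hb))))
      hac hbc
    exact reach_trans (reach_symm ha) (reach_trans (reach_mono h this) hb)
  · rintro ⟨H1, H2⟩ u v huv hu hv
    exact H1 u v (H2 u v huv ⟨u, rfl, hu⟩ ⟨v, rfl, hv⟩) hu hv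

theorem push_push {W : G.EState} {t t' : Finset (Fin G.n)} (h : t ⊆ t') :
    G.ofPred t' (G.col (G.ofPred t (G.col W))) = G.ofPred t' (G.col W) := by
  refine estate_ext rfl fun v => ?_
  constructor
  · rintro ⟨u, hu, a, ha, hc⟩
    exact ⟨a, reach_trans (reach_mono h ha) hu, hc⟩
  · rintro ⟨u, hu, hc⟩
    exact ⟨u, hu, u, rfl, hc⟩

theorem pk_push {W : G.EState} {t : Finset (Fin G.n)} (h : W.1 ⊆ t) (k : Fin G.n) :
    G.pk k (push W t) = push W (insert k t) := by
  classical
  have hh := ok_trans h (Finset.subset_insert k t)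
  by_cases h1 : ok W t
  · rw [push, if_pos h1, pk_single]
    unfold push
    have e1 : (G.ofPred t (G.col W)).1 = t := rfl
    rw [e1, push_push (Finset.subset_insert k t)]
    by_cases h2 : ok (G.ofPred t (G.col W)) (insert k t)
    · rw [if_pos h2, if_pos (hh.2 ⟨h1, h2⟩)]
    · rw [if_neg h2, if_neg (fun H => h2 (hh.1 H).2)]
  · rw [push, if_neg h1, map_zero, push, if_neg (fun H => h1 (hh.1 H).1)]

theorem jdeg_eq {G' : OGraph} (S : G.EState) (T : G'.EState) (φ : G.V → G'.V)
    (h1 : ∀ u v, G.col S u → G.col S v → (G.reach S.1 u v ↔ G'.reach T.1 (φ u) (φ v)))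
    (h2 : ∀ w, G'.col T w ↔ ∃ u, G.col S u ∧ G'.reach T.1 (φ u) w) :
    G.jdeg S = G'.jdeg T := by
  unfold jdeg
  have hout : ∀ K : G.Comp S.1, ∃ v, Quot.mk _ v = K := fun K => Quot.exists_rep K
  choose o ho using hout
  have hco : ∀ K, S.2 K → G.col S (o K) := by
    intro K hK
    unfold col
    rw [ho]; exact hK
  refine Nat.card_eq_of_bijective
    (fun K : {k : G.Comp S.1 // S.2 k} => (⟨Quot.mk _ (φ (o K.1)),
      (h2 _).2 ⟨_, hco K.1 K.2, rfl⟩⟩ : {k : G'.Comp T.1 // T.2 k})) ⟨?_, ?_⟩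
  · rintro ⟨K, hK⟩ ⟨L, hL⟩ h
    have h := congrArg Subtype.val h
    have := (h1 _ _ (hco K hK) (hco L hL)).2 h
    apply Subtype.ext
    change K = L
    rw [← ho K, ← ho L]
    exact this
  · rintro ⟨K, hK⟩
    obtain ⟨w, rfl⟩ := Quot.exists_rep K
    obtain ⟨u, hu, huw⟩ := (h2 w).1 hK
    refine ⟨⟨Quot.mk _ u, hu⟩, Subtype.ext ?_⟩
    change Quot.mk _ (φ (o (Quot.mk _ u))) = Quot.mk _ w
    rw [← show Quot.mk _ (φ u) = Quot.mk (G'.rel T.1) w from huw]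
    exact (h1 _ _ (hco (Quot.mk _ u) hu) hu).1 (ho (Quot.mk _ u))

end basic

section hom
variable {G G' G'' : OGraph}

noncomputable def Hmk (G : OGraph) (i j : ℕ) : (G.Zmod i j).toAddSubgroup →+ G.Hmod i j :=
  QuotientAddGroup.mk' _

theorem Hmk_surj (G : OGraph) (i j : ℕ) : Function.Surjective (G.Hmk i j) :=
  QuotientAddGroup.mk'_surjective _

theorem Hmk_zero (G : OGraph) (i j : ℕ) (z : (G.Zmod i j).toAddSubgroup) :
    G.Hmk i j z = 0 ↔ z.1 ∈ G.Bmod i j :=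
  QuotientAddGroup.eq_zero_iff z

theorem exists_map (g : (G.EState →₀ ℤ) →ₗ[ℤ] (G'.EState →₀ ℤ)) (i i' j : ℕ)
    (hZ : ∀ z ∈ G.Zmod i j, g z ∈ G'.Zmod i' j)
    (hB : ∀ z ∈ G.Bmod i j, g z ∈ G'.Bmod i' j) :
    ∃ F : G.Hmod i j →+ G'.Hmod i' j, ∀ z (hz : z ∈ G.Zmod i j),
      F (G.Hmk i j ⟨z, hz⟩) = G'.Hmk i' j ⟨g z, hZ z hz⟩ := by
  refine ⟨QuotientAddGroup.map _ _
    ((g.toAddMonoidHom.comp (G.Zmod i j).toAddSubgroup.subtype).codRestrict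
      (G'.Zmod i' j).toAddSubgroup (fun z => hZ z.1 z.2)) ?_, fun z hz => rfl⟩
  intro z hz
  exact hB _ hz

theorem Hmk_ind {i j : ℕ} (x : G.Hmod i j) : ∃ z, ∃ hz : z ∈ G.Zmod i j, G.Hmk i j ⟨z, hz⟩ = x := by
  obtain ⟨⟨z, hz⟩, rfl⟩ := Hmk_surj G i j x
  exact ⟨z, hz, rfl⟩

theorem les_abstract (G A D : OGraph)
    (ι1 : (A.EState →₀ ℤ) →ₗ[ℤ] (G.EState →₀ ℤ)) (ι2 : (D.EState →₀ ℤ) →ₗ[ℤ] (G.EState →₀ ℤ))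
    (π1 : (G.EState →₀ ℤ) →ₗ[ℤ] (A.EState →₀ ℤ)) (π2 : (G.EState →₀ ℤ) →ₗ[ℤ] (D.EState →₀ ℤ))
    (f : (A.EState →₀ ℤ) →ₗ[ℤ] (D.EState →₀ ℤ))
    (h11 : ∀ x, π1 (ι1 x) = x) (h22 : ∀ x, π2 (ι2 x) = x)
    (h12 : ∀ x, π1 (ι2 x) = 0) (h21 : ∀ x, π2 (ι1 x) = 0)
    (hdec : ∀ x, ι1 (π1 x) + ι2 (π2 x) = x)
    (hd1 : ∀ x, G.diff (ι1 x) = ι1 (A.diff x) + ι2 (f x))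
    (hd2 : ∀ x, G.diff (ι2 x) = - ι2 (D.diff x))
    (hf : ∀ x, f (A.diff x) = D.diff (f x))
    (cι1 : ∀ i j, ∀ x ∈ A.Cmod i j, ι1 x ∈ G.Cmod i j)
    (cι2 : ∀ i j, ∀ x ∈ D.Cmod i j, ι2 x ∈ G.Cmod (i + 1) j)
    (cπ1 : ∀ i j, ∀ x ∈ G.Cmod i j, π1 x ∈ A.Cmod i j)
    (cπ2 : ∀ i j, ∀ x ∈ G.Cmod (i + 1) j, π2 x ∈ D.Cmod i j)
    (cπ0 : ∀ j, ∀ x ∈ G.Cmod 0 j, π2 x = 0)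
    (cf : ∀ i j, ∀ x ∈ A.Cmod i j, f x ∈ D.Cmod i j) :
    ∃ (β : ∀ i j : ℕ, G.Hmod i j →+ A.Hmod i j)
      (γ : ∀ i j : ℕ, A.Hmod i j →+ D.Hmod i j)
      (α : ∀ i j : ℕ, D.Hmod i j →+ G.Hmod (i + 1) j),
      (∀ j : ℕ, Function.Injective (β 0 j)) ∧
      (∀ i j : ℕ, Function.Exact (β i j) (γ i j)) ∧
      (∀ i j : ℕ, Function.Exact (γ i j) (α i j)) ∧
      (∀ i j : ℕ, Function.Exact (α i j) (β (i + 1) j)) := by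
  have zmem : ∀ (K : OGraph) i j x, x ∈ K.Zmod i j ↔ K.diff x = 0 ∧ x ∈ K.Cmod i j := by
    intro K i j x; simp [Zmod]
  have b0 : ∀ (K : OGraph) j x, x ∈ K.Bmod 0 j ↔ x = 0 := by
    intro K j x; simp [Bmod]
  have bs : ∀ (K : OGraph) i j x, x ∈ K.Bmod (i + 1) j ↔ ∃ y ∈ K.Cmod i j, K.diff y = x := by
    intro K i j x; simp [Bmod]
  have hd : ∀ x, G.diff x = ι1 (A.diff (π1 x)) + ι2 (f (π1 x) - D.diff (π2 x)) := by
    intro x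
    conv_lhs => rw [← hdec x]
    rw [map_add, hd1, hd2, map_sub]; abel
  have p1d : ∀ x, π1 (G.diff x) = A.diff (π1 x) := by
    intro x; rw [hd, map_add, h11, h12, add_zero]
  have p2d : ∀ x, π2 (G.diff x) = f (π1 x) - D.diff (π2 x) := by
    intro x; rw [hd, map_add, h21, h22, zero_add]
  have Zβ : ∀ i j, ∀ z ∈ G.Zmod i j, π1 z ∈ A.Zmod i j := by
    intro i j z hz
    rw [zmem] at hz ⊢
    exact ⟨by rw [← p1d, hz.1, map_zero], cπ1 _ _ _ hz.2⟩
  have Bβ : ∀ i j, ∀ z ∈ G.Bmod i j, π1 z ∈ A.Bmod i j := by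
    rintro (_ | i) j z hz
    · rw [b0] at hz ⊢; rw [hz, map_zero]
    · rw [bs] at hz ⊢
      obtain ⟨y, hy, rfl⟩ := hz
      exact ⟨π1 y, cπ1 _ _ _ hy, (p1d y).symm⟩
  have Zγ : ∀ i j, ∀ z ∈ A.Zmod i j, f z ∈ D.Zmod i j := by
    intro i j z hz
    rw [zmem] at hz ⊢
    exact ⟨by rw [← hf, hz.1, map_zero], cf _ _ _ hz.2⟩
  have Bγ : ∀ i j, ∀ z ∈ A.Bmod i j, f z ∈ D.Bmod i j := by
    rintro (_ | i) j z hz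
    · rw [b0] at hz ⊢; rw [hz, map_zero]
    · rw [bs] at hz ⊢
      obtain ⟨y, hy, rfl⟩ := hz
      exact ⟨f y, cf _ _ _ hy, (hf y).symm⟩
  have Zα : ∀ i j, ∀ z ∈ D.Zmod i j, ι2 z ∈ G.Zmod (i + 1) j := by
    intro i j z hz
    rw [zmem] at hz ⊢
    exact ⟨by rw [hd2, hz.1, map_zero, neg_zero], cι2 _ _ _ hz.2⟩
  have Bα : ∀ i j, ∀ z ∈ D.Bmod i j, ι2 z ∈ G.Bmod (i + 1) j := by
    rintro (_ | i) j z hz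
    · rw [b0] at hz; rw [hz, map_zero]; exact zero_mem _
    · rw [bs] at hz ⊢
      obtain ⟨y, hy, rfl⟩ := hz
      exact ⟨- ι2 y, neg_mem (cι2 _ _ _ hy), by rw [map_neg, hd2, neg_neg]⟩
  choose β hβ using fun i j => exists_map (G := G) (G' := A) π1 i i j (Zβ i j) (Bβ i j)
  choose γ hγ using fun i j => exists_map (G := A) (G' := D) f i i j (Zγ i j) (Bγ i j)
  choose α hα using fun i j => exists_map (G := D) (G' := G) ι2 i (i + 1) j (Zα i j) (Bα i j)
  have mk_eq : ∀ (K : OGraph) i j x (hx : x ∈ K.Zmod i j) y (hy : y ∈ K.Zmod i j),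
      x - y ∈ K.Bmod i j → K.Hmk i j ⟨x, hx⟩ = K.Hmk i j ⟨y, hy⟩ := by
    intro K i j x hx y hy h
    rw [← sub_eq_zero, ← map_sub, Hmk_zero]
    exact h
  refine ⟨β, γ, α, ?_, ?_, ?_, ?_⟩
  · intro j
    rw [injective_iff_map_eq_zero]
    intro x hx
    obtain ⟨z, hz, rfl⟩ := Hmk_ind x
    rw [hβ, Hmk_zero, b0] at hx
    rw [Hmk_zero, b0]
    change z = 0
    change π1 z = 0 at hx
    rw [← hdec z, hx, cπ0 j z ((zmem _ _ _ _).1 hz).2, map_zero, map_zero, add_zero]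
  · intro i j x
    constructor
    · intro hx
      obtain ⟨a, ha, rfl⟩ := Hmk_ind x
      rw [hγ, Hmk_zero] at hx
      change f a ∈ _ at hx
      have ha' := (zmem _ _ _ _).1 ha
      have : ∃ b, ι2 b ∈ G.Cmod i j ∧ D.diff b = f a := by
        rcases i with _ | i
        · rw [b0] at hx
          exact ⟨0, by rw [map_zero]; exact zero_mem _, by rw [hx, map_zero]⟩
        · rw [bs] at hx
          obtain ⟨b, hb, hb'⟩ := hx
          exact ⟨b, cι2 _ _ _ hb, hb'⟩
      obtain ⟨b, hb, hb'⟩ := this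
      have hz : ι1 a + ι2 b ∈ G.Zmod i j := by
        rw [zmem]
        refine ⟨?_, add_mem (cι1 _ _ _ ha'.2) hb⟩
        rw [map_add, hd1, hd2, hb', ha'.1, map_zero]; abel
      refine ⟨G.Hmk i j ⟨_, hz⟩, ?_⟩
      rw [hβ]
      apply mk_eq
      rw [map_add, h11, h12, add_zero, sub_self]; exact zero_mem _
    · rintro ⟨y, rfl⟩
      obtain ⟨z, hz, rfl⟩ := Hmk_ind y
      rw [hβ, hγ, Hmk_zero]
      change f (π1 z) ∈ _
      have hz' := (zmem _ _ _ _).1 hz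
      have h0 := p2d z
      rw [hz'.1, map_zero] at h0
      have h0 := sub_eq_zero.1 h0.symm
      rcases i with _ | i
      · rw [b0, h0, cπ0 j z hz'.2, map_zero]
      · rw [bs]
        exact ⟨π2 z, cπ2 _ _ _ hz'.2, h0.symm⟩
  · intro i j x
    constructor
    · intro hx
      obtain ⟨b, hb, rfl⟩ := Hmk_ind x
      rw [hα, Hmk_zero, bs] at hx
      obtain ⟨y, hy, hyb⟩ := hx
      change G.diff y = ι2 b at hyb
      have e1 : A.diff (π1 y) = 0 := by rw [← p1d, hyb, h12]
      have e2 : b = f (π1 y) - D.diff (π2 y) := by rw [← p2d, hyb, h22]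
      refine ⟨A.Hmk i j ⟨π1 y, (zmem _ _ _ _).2 ⟨e1, cπ1 _ _ _ hy⟩⟩, ?_⟩
      rw [hγ]
      apply mk_eq
      rw [e2, sub_sub_cancel]
      rcases i with _ | i
      · rw [b0, cπ0 j y hy, map_zero]
      · rw [bs]
        exact ⟨π2 y, cπ2 _ _ _ hy, rfl⟩
    · rintro ⟨y, rfl⟩
      obtain ⟨a, ha, rfl⟩ := Hmk_ind y
      have ha' := (zmem _ _ _ _).1 ha
      rw [hγ, hα, Hmk_zero, bs]
      exact ⟨ι1 a, cι1 _ _ _ ha'.2, by rw [hd1, ha'.1, map_zero, zero_add]⟩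
  · intro i j x
    constructor
    · intro hx
      obtain ⟨z, hz, rfl⟩ := Hmk_ind x
      have hz' := (zmem _ _ _ _).1 hz
      rw [hβ, Hmk_zero, bs] at hx
      obtain ⟨a, ha, haz⟩ := hx
      change A.diff a = π1 z at haz
      have h0 := p2d z
      rw [hz'.1, map_zero] at h0
      have h0 := sub_eq_zero.1 h0.symm
      have hb : π2 z - f a ∈ D.Zmod i j := by
        rw [zmem]
        refine ⟨?_, sub_mem (cπ2 _ _ _ hz'.2) (cf _ _ _ ha)⟩
        rw [map_sub, ← h0, ← hf, haz, sub_self]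
      refine ⟨D.Hmk i j ⟨_, hb⟩, ?_⟩
      rw [hα]
      apply mk_eq
      rw [bs]
      refine ⟨- ι1 a, neg_mem (cι1 _ _ _ ha), ?_⟩
      have h9 := hdec z
      rw [map_neg, hd1, haz, map_sub]
      generalize ι1 (π1 z) = p at *
      generalize ι2 (π2 z) = q at *
      rw [← h9]; abel
    · rintro ⟨y, rfl⟩
      obtain ⟨b, hb, rfl⟩ := Hmk_ind y
      rw [hα, hβ, Hmk_zero]
      change π1 (ι2 b) ∈ _
      rw [h12]; exact zero_mem _

end hom

end OGraph

namespace OGraph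

section dc
variable {V : Type} [Fintype V] {n : ℕ} (ends : Fin (n + 1) → Sym2 V) (e : Fin (n + 1))

/-- the graph itself -/
abbrev gG : OGraph := OGraph.mk V (n + 1) ends

/-- transport of edge sets -/
def up (s : Finset (Fin n)) : Finset (Fin (n + 1)) := s.map (Fin.succAboveEmb e)

theorem mem_up (s : Finset (Fin n)) (k : Fin n) : e.succAbove k ∈ up e s ↔ k ∈ s := by
  simp [up]

theorem not_mem_up (s : Finset (Fin n)) : e ∉ up e s := by
  simp [up, Fin.succAbove_ne]

theorem up_insert (s : Finset (Fin n)) (k : Fin n) :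
    up e (insert k s) = insert (e.succAbove k) (up e s) := by
  simp [up, Finset.map_insert]

theorem up_inj {s t : Finset (Fin n)} (h : up e s = up e t) : s = t :=
  Finset.map_injective _ h

theorem iup_inj {s t : Finset (Fin n)} (h : insert e (up e s) = insert e (up e t)) : s = t := by
  ext k
  have := congrArg (fun z => e.succAbove k ∈ z) h
  simpa [mem_up, Fin.succAbove_ne] using this

theorem up_surj (w : Finset (Fin (n + 1))) (h : e ∉ w) : ∃ s, up e s = w := by
  refine ⟨Finset.univ.filter fun k => e.succAbove k ∈ w, ?_⟩
  ext f
  rcases Fin.eq_self_or_eq_succAbove e f with rfl | ⟨k, rfl⟩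
  · simp [h, not_mem_up]
  · simp [mem_up]

theorem iup_surj (w : Finset (Fin (n + 1))) (h : e ∈ w) : ∃ s, insert e (up e s) = w := by
  obtain ⟨s, hs⟩ := up_surj e (w.erase e) (by simp)
  exact ⟨s, by rw [hs, Finset.insert_erase h]⟩

theorem up_card (s : Finset (Fin n)) : (up e s).card = s.card := by simp [up]

theorem iup_card (s : Finset (Fin n)) : (insert e (up e s)).card = s.card + 1 := by
  rw [Finset.card_insert_of_notMem (not_mem_up e s), up_card]

theorem reach_del (s : Finset (Fin n)) (u v : V) :
    (delG V ends e).reach s u v ↔ (gG ends).reach (up e s) u v := by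
  constructor
  · intro h
    refine congrArg (Quot.lift (r := (delG V ends e).rel s)
      (fun w : V => Quot.mk ((gG ends).rel (up e s)) w) ?_) h
    rintro a b ⟨k, hk, hab⟩
    exact Quot.sound ⟨e.succAbove k, (mem_up e s k).2 hk, hab⟩
  · intro h
    refine congrArg (Quot.lift (r := (gG ends).rel (up e s))
      (fun w : V => Quot.mk ((delG V ends e).rel s) w) ?_) h
    rintro a b ⟨f, hf, hab⟩
    obtain ⟨k, hk, rfl⟩ := Finset.mem_map.1 hf
    exact Quot.sound ⟨k, hk, hab⟩

/-- the vertex projection -/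
def vq (v : V) : (ctrG V ends e).V := Quot.mk (fun u v : V => ends e = s(u, v)) v

theorem vq_surj (x : (ctrG V ends e).V) : ∃ v, vq ends e v = x := Quot.exists_rep x

theorem reach_ctr (s : Finset (Fin n)) (u v : V) :
    (ctrG V ends e).reach s (vq ends e u) (vq ends e v) ↔
      (gG ends).reach (insert e (up e s)) u v := by
  constructor
  · intro h
    have hl : ∀ a b : V, ends e = s(a, b) →
      Quot.mk ((gG ends).rel (insert e (up e s))) a = Quot.mk _ b :=
      fun a b hab => Quot.sound ⟨e, Finset.mem_insert_self _ _, hab⟩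
    refine congrArg (Quot.lift (r := (ctrG V ends e).rel s)
      (Quot.lift (fun w : V => Quot.mk ((gG ends).rel (insert e (up e s))) w) hl) ?_) h
    rintro a b ⟨k, hk, hab⟩
    change (ends (e.succAbove k)).map (Quot.mk _) = s(a, b) at hab
    have hk' : e.succAbove k ∈ insert e (up e s) := Finset.mem_insert_of_mem ((mem_up e s k).2 hk)
    have hS : ∀ a b : V, ends (e.succAbove k) = s(a, b) →
      Quot.mk ((gG ends).rel (insert e (up e s))) a = Quot.mk _ b :=
      fun a b hab => Quot.sound ⟨_, hk', hab⟩
    generalize ends (e.succAbove k) = q at hab hS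
    induction q using Sym2.ind with
    | _ x y =>
      replace hab := Sym2.eq_iff.1 hab
      rcases hab with ⟨rfl, rfl⟩ | ⟨rfl, rfl⟩
      · exact hS x y rfl
      · exact (hS x y rfl).symm
  · intro h
    refine congrArg (Quot.lift (r := (gG ends).rel (insert e (up e s)))
      (fun w : V => Quot.mk ((ctrG V ends e).rel s) (vq ends e w)) ?_) h
    rintro a b ⟨f, hf, hab⟩
    rcases Finset.mem_insert.1 hf with rfl | hf
    · exact congrArg _ (Quot.sound hab)
    · obtain ⟨k, hk, rfl⟩ := Finset.mem_map.1 hf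
      refine Quot.sound ⟨k, hk, ?_⟩
      change (ends (e.succAbove k)).map (Quot.mk _) = _
      have : ends (e.succAbove k) = s(a, b) := hab
      rw [this]; rfl

def i1 (S : (delG V ends e).EState) : (gG ends).EState :=
  (gG ends).ofPred (up e S.1) ((delG V ends e).col S)

def i2 (T : (ctrG V ends e).EState) : (gG ends).EState :=
  (gG ends).ofPred (insert e (up e T.1)) (fun v => (ctrG V ends e).col T (vq ends e v))

theorem col_i1 (S : (delG V ends e).EState) (v : V) :
    (gG ends).col (i1 ends e S) v ↔ (delG V ends e).col S v := by
  constructor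
  · rintro ⟨u, hu, hc⟩
    exact col_reach S ((reach_del ends e _ _ _).2 hu) hc
  · intro h; exact ⟨v, rfl, h⟩

theorem col_i2 (T : (ctrG V ends e).EState) (v : V) :
    (gG ends).col (i2 ends e T) v ↔ (ctrG V ends e).col T (vq ends e v) := by
  constructor
  · rintro ⟨u, hu, hc⟩
    exact col_reach T ((reach_ctr ends e _ _ _).2 hu) hc
  · intro h; exact ⟨v, rfl, h⟩

theorem i1_inj : Function.Injective (i1 ends e) := by
  intro S T h
  refine estate_ext (up_inj e (congrArg Sigma.fst h)) fun v => ?_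
  exact (col_i1 ends e S v).symm.trans (by rw [h]; exact col_i1 ends e T v)

theorem i2_inj : Function.Injective (i2 ends e) := by
  intro S T h
  refine estate_ext (iup_inj e (congrArg Sigma.fst h)) fun x => ?_
  obtain ⟨v, rfl⟩ := vq_surj ends e x
  rw [← col_i2, ← col_i2, h]

theorem i12 (S : (delG V ends e).EState) (T : (ctrG V ends e).EState) :
    i1 ends e S ≠ i2 ends e T := by
  intro h
  have : up e S.1 = insert e (up e T.1) := congrArg Sigma.fst h
  exact not_mem_up e S.1 (this ▸ Finset.mem_insert_self _ _)

theorem i1_ofPred (s : Finset (Fin n)) (P : V → Prop) :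
    i1 ends e ((delG V ends e).ofPred s P) = (gG ends).ofPred (up e s) P := by
  refine estate_ext rfl fun v => ?_
  rw [col_i1]
  exact exists_congr fun u => and_congr_left fun _ => reach_del ends e s u v

theorem i2_ofPred (s : Finset (Fin n)) (P : (ctrG V ends e).V → Prop) :
    i2 ends e ((ctrG V ends e).ofPred s P) =
      (gG ends).ofPred (insert e (up e s)) (fun v => P (vq ends e v)) := by
  refine estate_ext rfl fun v => ?_
  rw [col_i2]
  constructor
  · rintro ⟨x, hx, hP⟩
    obtain ⟨u, rfl⟩ := vq_surj ends e x
    exact ⟨u, (reach_ctr ends e s u v).1 hx, hP⟩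
  · rintro ⟨u, hu, hP⟩
    exact ⟨_, (reach_ctr ends e s u v).2 hu, hP⟩

theorem i_surj (W : (gG ends).EState) : (∃ S, i1 ends e S = W) ∨ (∃ T, i2 ends e T = W) := by
  by_cases h : e ∈ W.1
  · right
    obtain ⟨s, hs⟩ := iup_surj e W.1 h
    refine ⟨(ctrG V ends e).ofPred s (fun x => ∃ u, vq ends e u = x ∧ (gG ends).col W u), ?_⟩
    rw [i2_ofPred]
    refine estate_ext hs fun v => ?_
    rw [col_ofPred, hs]
    constructor
    · rintro ⟨u, hu, a, ha, hc⟩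
      refine col_reach W (u := a) (reach_trans ?_ hu) hc
      rw [← hs, ← reach_ctr, ha]; rfl
    · intro hv
      exact ⟨v, rfl, v, rfl, hv⟩
  · left
    obtain ⟨s, hs⟩ := up_surj e W.1 h
    refine ⟨(delG V ends e).ofPred s ((gG ends).col W), ?_⟩
    rw [i1_ofPred]
    refine estate_ext hs fun v => ?_
    rw [col_ofPred, hs]
    constructor
    · rintro ⟨u, hu, hc⟩
      exact col_reach W hu hc
    · intro hv
      exact ⟨v, rfl, hv⟩

theorem jdeg_i1 (S : (delG V ends e).EState) :
    (gG ends).jdeg (i1 ends e S) = (delG V ends e).jdeg S := by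
  symm
  refine jdeg_eq S (i1 ends e S) (fun v : V => v) (fun u v _ _ => reach_del ends e _ _ _) ?_
  intro w
  exact exists_congr fun u => and_comm

theorem jdeg_i2 (T : (ctrG V ends e).EState) :
    (gG ends).jdeg (i2 ends e T) = (ctrG V ends e).jdeg T := by
  refine jdeg_eq (i2 ends e T) T (vq ends e) (fun u v _ _ => (reach_ctr ends e _ _ _).symm) ?_
  intro w
  constructor
  · intro h
    obtain ⟨v, rfl⟩ := vq_surj ends e w
    exact ⟨v, (col_i2 ends e T v).2 h, rfl⟩
  · rintro ⟨u, hu, hr⟩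
    exact col_reach T hr ((col_i2 ends e T u).1 hu)

theorem jdeg_ofPred {G : OGraph} (W : G.EState) (t : Finset (Fin G.n)) (h : W.1 ⊆ t)
    (hok : ok W t) : G.jdeg (G.ofPred t (G.col W)) = G.jdeg W := by
  symm
  refine jdeg_eq W _ (fun v => v) (fun u v hu hv => ⟨reach_mono h, fun hr => hok u v hr hu hv⟩) ?_
  intro w
  exact exists_congr fun u => and_comm

theorem push_i1 (S : (delG V ends e).EState) (t : Finset (Fin n)) :
    Finsupp.mapDomain (i1 ends e) (push S t) = push (i1 ends e S) (up e t) := by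
  classical
  have hok : ok S t ↔ ok (i1 ends e S) (up e t) := by
    constructor
    · intro H u v hr hu hv
      exact (reach_del ends e _ _ _).1 (H _ _ ((reach_del ends e _ _ _).2 hr)
        ((col_i1 ends e _ _).1 hu) ((col_i1 ends e _ _).1 hv))
    · intro H u v hr hu hv
      exact (reach_del ends e _ _ _).2 (H _ _ ((reach_del ends e _ _ _).1 hr)
        ((col_i1 ends e _ _).2 hu) ((col_i1 ends e _ _).2 hv))
  unfold push
  by_cases h : ok S t
  · rw [if_pos h, if_pos (hok.1 h), Finsupp.mapDomain_single]
    refine congrArg (fun z => Finsupp.single z (1 : ℤ)) ((i1_ofPred ends e t _).trans ?_)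
    congr 1
    funext v
    exact propext (col_i1 ends e S v).symm
  · rw [if_neg h, if_neg (fun H => h (hok.2 H)), Finsupp.mapDomain_zero]

theorem push_i2 (S : (ctrG V ends e).EState) (t : Finset (Fin n)) :
    Finsupp.mapDomain (i2 ends e) (push S t) = push (i2 ends e S) (insert e (up e t)) := by
  classical
  have hok : ok S t ↔ ok (i2 ends e S) (insert e (up e t)) := by
    constructor
    · intro H u v hr hu hv
      exact (reach_ctr ends e _ _ _).1 (H _ _ ((reach_ctr ends e _ _ _).2 hr)
        ((col_i2 ends e _ _).1 hu) ((col_i2 ends e _ _).1 hv))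
    · intro H x y hr hu hv
      obtain ⟨u, rfl⟩ := vq_surj ends e x
      obtain ⟨v, rfl⟩ := vq_surj ends e y
      exact (reach_ctr ends e _ _ _).2 (H _ _ ((reach_ctr ends e _ _ _).1 hr)
        ((col_i2 ends e _ _).2 hu) ((col_i2 ends e _ _).2 hv))
  unfold push
  by_cases h : ok S t
  · rw [if_pos h, if_pos (hok.1 h), Finsupp.mapDomain_single]
    refine congrArg (fun z => Finsupp.single z (1 : ℤ)) ((i2_ofPred ends e t _).trans ?_)
    congr 1
    funext v
    exact propext (col_i2 ends e S v).symm
  · rw [if_neg h, if_neg (fun H => h (hok.2 H)), Finsupp.mapDomain_zero]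

noncomputable def qS (S : (delG V ends e).EState) : (ctrG V ends e).EState :=
  (ctrG V ends e).ofPred S.1 (fun x => ∃ u, vq ends e u = x ∧ (delG V ends e).col S u)

theorem i2_qS (S : (delG V ends e).EState) :
    i2 ends e (qS ends e S) =
      (gG ends).ofPred (insert e (up e S.1)) ((gG ends).col (i1 ends e S)) := by
  refine (i2_ofPred ends e S.1 _).trans ?_
  refine estate_ext rfl fun v => ?_
  constructor
  · rintro ⟨u, hu, a, ha, hc⟩
    exact ⟨a, reach_trans ((reach_ctr ends e S.1 a u).1 (by rw [ha]; rfl)) hu,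
      (col_i1 ends e S a).2 hc⟩
  · rintro ⟨u, hu, hc⟩
    exact ⟨u, hu, u, rfl, (col_i1 ends e S u).1 hc⟩

open Classical in
noncomputable def fS (S : (delG V ends e).EState) : (ctrG V ends e).EState →₀ ℤ :=
  if ok (i1 ends e S) (insert e (up e S.1)) then Finsupp.single (qS ends e S) 1 else 0

theorem i2_fS (S : (delG V ends e).EState) :
    Finsupp.mapDomain (i2 ends e) (fS ends e S) =
      push (i1 ends e S) (insert e (up e S.1)) := by
  classical
  unfold fS push
  split_ifs with h
  · rw [Finsupp.mapDomain_single, i2_qS]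
  · exact Finsupp.mapDomain_zero

noncomputable def fL : ((delG V ends e).EState →₀ ℤ) →ₗ[ℤ] ((ctrG V ends e).EState →₀ ℤ) :=
  Finsupp.lsum ℤ fun S => LinearMap.toSpanSingleton ℤ _ (fS ends e S)

theorem fL_single (S : (delG V ends e).EState) :
    fL ends e (Finsupp.single S 1) = fS ends e S := by simp [fL]

/-- sign -/
def eps (t : Finset (Fin n)) : ℤ := (-1) ^ ((up e t).filter fun f => f < e).card

theorem eps_sq (t : Finset (Fin n)) : eps e t * eps e t = 1 := by
  unfold eps
  rw [← mul_pow]; simp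

noncomputable def sg : ((ctrG V ends e).EState →₀ ℤ) →ₗ[ℤ] ((ctrG V ends e).EState →₀ ℤ) :=
  Finsupp.lsum ℤ fun S => LinearMap.toSpanSingleton ℤ _ (Finsupp.single S (eps e S.1))

theorem sg_single (S : (ctrG V ends e).EState) (a : ℤ) :
    sg ends e (Finsupp.single S a) = eps e S.1 • Finsupp.single S a := by
  simp [sg, mul_comm]

theorem sg_apply (x : (ctrG V ends e).EState →₀ ℤ) (S : (ctrG V ends e).EState) :
    sg ends e x S = eps e S.1 * x S := by
  classical
  induction x using Finsupp.induction_linear with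
  | zero => simp
  | add f g hf hg => rw [map_add, Finsupp.add_apply, hf, hg, Finsupp.add_apply, mul_add]
  | single T a =>
    rw [sg_single, Finsupp.smul_apply, smul_eq_mul, Finsupp.single_apply]
    split_ifs with h
    · rw [h]
    · simp

theorem sg_push (S : (ctrG V ends e).EState) (t : Finset (Fin n)) :
    sg ends e (push S t) = eps e t • push S t := by
  classical
  unfold push
  split_ifs
  · rw [sg_single]; rfl
  · simp

theorem sg_fS (S : (delG V ends e).EState) :
    sg ends e (fS ends e S) = eps e S.1 • fS ends e S := by
  classical
  unfold fS
  split_ifs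
  · rw [sg_single]; rfl
  · simp


theorem addEdge_i1 (S : (delG V ends e).EState) (k : Fin n) :
    (gG ends).addEdge (i1 ends e S) (e.succAbove k) =
      Finsupp.mapDomain (i1 ends e) ((delG V ends e).addEdge S k) := by
  have h1 : e.succAbove k ∈ (i1 ends e S).1 ↔ k ∈ S.1 := mem_up e S.1 k
  by_cases h : k ∈ S.1
  · exact (addEdge_pos (h1.2 h)).trans
      (Finsupp.mapDomain_zero.symm.trans (congrArg _ (addEdge_pos h).symm))
  · refine (addEdge_neg (fun H => h (h1.1 H))).trans (Eq.trans ?_ (congrArg _ (addEdge_neg h).symm))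
    refine Eq.trans ?_ (push_i1 ends e S (insert k S.1)).symm
    exact congrArg _ (up_insert e S.1 k).symm

theorem iup_insert (s : Finset (Fin n)) (k : Fin n) :
    insert e (up e (insert k s)) = insert (e.succAbove k) (insert e (up e s)) := by
  rw [up_insert, Finset.insert_comm]

theorem addEdge_i2 (S : (ctrG V ends e).EState) (k : Fin n) :
    (gG ends).addEdge (i2 ends e S) (e.succAbove k) =
      Finsupp.mapDomain (i2 ends e) ((ctrG V ends e).addEdge S k) := by
  have h1 : e.succAbove k ∈ (i2 ends e S).1 ↔ k ∈ S.1 :=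
    Finset.mem_insert.trans ((or_iff_right (Fin.succAbove_ne e k)).trans (mem_up e S.1 k))
  by_cases h : k ∈ S.1
  · exact (addEdge_pos (h1.2 h)).trans
      (Finsupp.mapDomain_zero.symm.trans (congrArg _ (addEdge_pos h).symm))
  · refine (addEdge_neg (fun H => h (h1.1 H))).trans (Eq.trans ?_ (congrArg _ (addEdge_neg h).symm))
    refine Eq.trans ?_ (push_i2 ends e S (insert k S.1)).symm
    exact congrArg _ (iup_insert e S.1 k).symm

theorem sg_addEdge (S : (ctrG V ends e).EState) (k : Fin n) :
    sg ends e ((ctrG V ends e).addEdge S k) =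
      eps e (insert k S.1) • (ctrG V ends e).addEdge S k := by
  by_cases h : k ∈ S.1
  · have h0 := addEdge_pos (G := ctrG V ends e) h
    rw [h0, map_zero, smul_zero]
  · have h0 := addEdge_neg (G := ctrG V ends e) h
    rw [h0]
    exact sg_push ends e S _

theorem sign1 (s : Finset (Fin n)) (k : Fin n) :
    ((up e s).filter fun f => f < e.succAbove k).card = (s.filter fun f => f < k).card := by
  unfold up
  rw [Finset.filter_map, Finset.card_map]
  congr 1
  ext f
  simp only [Finset.mem_filter, Function.comp_apply, Fin.succAboveEmb_apply,
    Fin.succAbove_lt_succAbove_iff]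

theorem sign2 (s : Finset (Fin n)) (k : Fin n) (hk : k ∉ s) :
    (-1 : ℤ) ^ ((insert e (up e s)).filter fun f => f < e.succAbove k).card * eps e s =
      - ((-1 : ℤ) ^ (s.filter fun f => f < k).card * eps e (insert k s)) := by
  unfold eps
  rw [up_insert, Finset.filter_insert, Finset.filter_insert, ← sign1 e s k]
  have hne := Fin.succAbove_ne e k
  by_cases h : e < e.succAbove k
  · rw [if_pos h, if_neg (not_lt.2 h.le), Finset.card_insert_of_notMem, pow_succ]
    · ring
    · simp [not_mem_up]
  · have h' : e.succAbove k < e := lt_of_le_of_ne (not_lt.1 h) hne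
    rw [if_neg h, if_pos h', Finset.card_insert_of_notMem, pow_succ]
    · ring
    · simp [mem_up, hk]

theorem i2_fL (x : (delG V ends e).EState →₀ ℤ) :
    Finsupp.lmapDomain ℤ ℤ (i2 ends e) (fL ends e x) =
      (gG ends).pk e (Finsupp.lmapDomain ℤ ℤ (i1 ends e) x) := by
  revert x
  refine LinearMap.congr_fun (f := (Finsupp.lmapDomain ℤ ℤ (i2 ends e)).comp (fL ends e))
    (g := ((gG ends).pk e).comp (Finsupp.lmapDomain ℤ ℤ (i1 ends e))) ?_
  refine Finsupp.lhom_ext' fun S => LinearMap.ext_ring ?_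
  simp only [LinearMap.comp_apply, Finsupp.lsingle_apply, fL_single, Finsupp.lmapDomain_apply,
    Finsupp.mapDomain_single, pk_single]
  exact i2_fS ends e S

theorem i2_pk (k : Fin n) (x : (ctrG V ends e).EState →₀ ℤ) :
    Finsupp.lmapDomain ℤ ℤ (i2 ends e) ((ctrG V ends e).pk k x) =
      (gG ends).pk (e.succAbove k) (Finsupp.lmapDomain ℤ ℤ (i2 ends e) x) := by
  revert x
  refine LinearMap.congr_fun
    (f := (Finsupp.lmapDomain ℤ ℤ (i2 ends e)).comp ((ctrG V ends e).pk k))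
    (g := ((gG ends).pk (e.succAbove k)).comp (Finsupp.lmapDomain ℤ ℤ (i2 ends e))) ?_
  refine Finsupp.lhom_ext' fun S => LinearMap.ext_ring ?_
  simp only [LinearMap.comp_apply, Finsupp.lsingle_apply, Finsupp.lmapDomain_apply,
    Finsupp.mapDomain_single, pk_single]
  refine Eq.trans (congrArg _ (pk_single (G := ctrG V ends e) k S)) ?_
  refine (push_i2 ends e S (insert k S.1)).trans ?_
  exact congrArg _ (iup_insert e S.1 k)

theorem fL_push (S : (delG V ends e).EState) (k : Fin n) :
    fL ends e (push S (insert k S.1 : Finset (Fin n))) = (ctrG V ends e).pk k (fS ends e S) := by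
  apply Finsupp.mapDomain_injective (i2_inj ends e)
  refine (i2_fL ends e _).trans (Eq.trans ?_ (i2_pk ends e k _).symm)
  have h1 : Finsupp.lmapDomain ℤ ℤ (i1 ends e) (push S (insert k S.1 : Finset (Fin n))) =
    push (i1 ends e S) (up e (insert k S.1)) := push_i1 ends e S (insert k S.1)
  have h2 : Finsupp.lmapDomain ℤ ℤ (i2 ends e) (fS ends e S) =
      push (i1 ends e S) (insert e (up e S.1)) := i2_fS ends e S
  rw [h1, h2]
  have h3 := pk_push (G := gG ends) (W := i1 ends e S) (t := up e (insert k S.1))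
    (Finset.map_subset_map.2 (Finset.subset_insert k S.1)) e
  have h4 := pk_push (G := gG ends) (W := i1 ends e S) (t := insert e (up e S.1))
    (Finset.subset_insert e (up e S.1)) (e.succAbove k)
  have h5 : push (i1 ends e S) (insert e (up e (insert k S.1))) =
      push (i1 ends e S) (insert (e.succAbove k) (insert e (up e S.1))) :=
    congrArg _ (iup_insert e S.1 k)
  exact h3.trans (h5.trans h4.symm)

theorem diff_fS (S : (delG V ends e).EState) :
    (ctrG V ends e).diff (fS ends e S) =
      ∑ k : Fin n, ((-1 : ℤ) ^ (S.1.filter fun f => f < k).card) •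
        fL ends e ((delG V ends e).addEdge S k) := by
  classical
  by_cases h : ok (i1 ends e S) (insert e (up e S.1))
  · have h0 : fS ends e S = Finsupp.single (qS ends e S) 1 := if_pos h
    rw [h0, diff_single]
    refine Finset.sum_congr rfl fun k _ => ?_
    refine congrArg₂ (· • ·) rfl ?_
    by_cases hk : k ∈ S.1
    · exact (addEdge_pos (G := ctrG V ends e) (S := qS ends e S) hk).trans
        ((map_zero (fL ends e)).symm.trans (congrArg _ (addEdge_pos hk).symm))
    · refine (addEdge_neg (G := ctrG V ends e) (S := qS ends e S) hk).trans
        (Eq.trans ?_ (congrArg _ (addEdge_neg hk).symm))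
      refine Eq.trans ?_ (fL_push ends e S k).symm
      rw [h0]
      exact (pk_single (G := ctrG V ends e) k (qS ends e S)).symm
  · have h0 : fS ends e S = 0 := if_neg h
    rw [h0, map_zero]
    symm
    refine Finset.sum_eq_zero fun k _ => ?_
    have : fL ends e ((delG V ends e).addEdge S k) = 0 := by
      by_cases hk : k ∈ S.1
      · exact (congrArg _ (addEdge_pos hk)).trans (map_zero (fL ends e))
      · refine (congrArg _ (addEdge_neg hk)).trans ((fL_push ends e S k).trans ?_)
        rw [h0, map_zero]
    rw [this, smul_zero]

theorem fL_chain (x : (delG V ends e).EState →₀ ℤ) :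
    fL ends e ((delG V ends e).diff x) = (ctrG V ends e).diff (fL ends e x) := by
  revert x
  refine LinearMap.congr_fun (f := (fL ends e).comp (delG V ends e).diff)
    (g := (ctrG V ends e).diff.comp (fL ends e)) ?_
  refine Finsupp.lhom_ext' fun S => LinearMap.ext_ring ?_
  simp only [LinearMap.comp_apply, Finsupp.lsingle_apply, fL_single, diff_single]
  refine Eq.trans ?_ (diff_fS ends e S).symm
  unfold dState
  rw [map_sum]
  refine Finset.sum_congr rfl fun k _ => ?_
  rw [map_smul]
  rfl

noncomputable def iota1 : ((delG V ends e).EState →₀ ℤ) →ₗ[ℤ] ((gG ends).EState →₀ ℤ) :=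
  Finsupp.lmapDomain ℤ ℤ (i1 ends e)

noncomputable def iota2 : ((ctrG V ends e).EState →₀ ℤ) →ₗ[ℤ] ((gG ends).EState →₀ ℤ) :=
  (Finsupp.lmapDomain ℤ ℤ (i2 ends e)).comp (sg ends e)

noncomputable def pi1 : ((gG ends).EState →₀ ℤ) →ₗ[ℤ] ((delG V ends e).EState →₀ ℤ) :=
  Finsupp.lcomapDomain (i1 ends e) (i1_inj ends e)

noncomputable def pi2 : ((gG ends).EState →₀ ℤ) →ₗ[ℤ] ((ctrG V ends e).EState →₀ ℤ) :=
  (sg ends e).comp (Finsupp.lcomapDomain (i2 ends e) (i2_inj ends e))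

theorem iota1_i1 (x) (S) : iota1 ends e x (i1 ends e S) = x S :=
  Finsupp.mapDomain_apply (i1_inj ends e) x S

theorem iota1_i2 (x) (T) : iota1 ends e x (i2 ends e T) = 0 :=
  Finsupp.mapDomain_of_notMem_range _ _ (by rintro ⟨S, hS⟩; exact i12 ends e S T hS)

theorem iota2_i2 (x) (T) : iota2 ends e x (i2 ends e T) = eps e T.1 * x T :=
  (Finsupp.mapDomain_apply (i2_inj ends e) _ T).trans (sg_apply ends e x T)

theorem iota2_i1 (x) (S) : iota2 ends e x (i1 ends e S) = 0 :=
  Finsupp.mapDomain_of_notMem_range _ _ (by rintro ⟨T, hT⟩; exact i12 ends e S T hT.symm)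

theorem pi1_apply (x) (S) : pi1 ends e x S = x (i1 ends e S) := rfl

theorem pi2_apply (x) (T) : pi2 ends e x T = eps e T.1 * x (i2 ends e T) :=
  sg_apply ends e _ T

theorem eps_mul (t : Finset (Fin n)) (a : ℤ) : eps e t * (eps e t * a) = a := by
  rw [← mul_assoc, eps_sq, one_mul]

theorem eps_ne (t : Finset (Fin n)) : eps e t ≠ 0 := by
  intro h
  have := eps_sq e t
  rw [h] at this
  simp at this

theorem hdec' (x) : iota1 ends e (pi1 ends e x) + iota2 ends e (pi2 ends e x) = x := by
  refine Finsupp.ext fun W => ?_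
  rw [Finsupp.add_apply]
  rcases i_surj ends e W with ⟨S, rfl⟩ | ⟨T, rfl⟩
  · rw [iota1_i1, iota2_i1, add_zero, pi1_apply]
  · rw [iota1_i2, iota2_i2, zero_add, pi2_apply]
    exact eps_mul e T.1 _

theorem hd1' (x) : (gG ends).diff (iota1 ends e x) =
    iota1 ends e ((delG V ends e).diff x) + iota2 ends e (fL ends e x) := by
  revert x
  refine LinearMap.congr_fun (f := (gG ends).diff.comp (iota1 ends e))
    (g := (iota1 ends e).comp (delG V ends e).diff + (iota2 ends e).comp (fL ends e)) ?_
  refine Finsupp.lhom_ext' fun S => LinearMap.ext_ring ?_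
  simp only [LinearMap.comp_apply, LinearMap.add_apply, Finsupp.lsingle_apply, fL_single,
    diff_single]
  have h1 : iota1 ends e (Finsupp.single S 1) = Finsupp.single (i1 ends e S) 1 :=
    Finsupp.mapDomain_single
  rw [h1, diff_single]
  unfold dState
  refine (Fin.sum_univ_succAbove _ e).trans ?_
  rw [add_comm, map_sum]
  refine congrArg₂ (· + ·) (Finset.sum_congr rfl fun k _ => ?_) ?_
  · rw [map_smul]
    exact congrArg₂ (· • ·) (congrArg _ (sign1 e S.1 k)) (addEdge_i1 ends e S k)
  · rw [iota2, LinearMap.comp_apply, sg_fS, map_smul]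
    refine congrArg₂ (· • ·) rfl ?_
    refine (addEdge_neg (not_mem_up e S.1)).trans (i2_fS ends e S).symm

theorem hd2' (x) : (gG ends).diff (iota2 ends e x) =
    - iota2 ends e ((ctrG V ends e).diff x) := by
  revert x
  refine LinearMap.congr_fun (f := (gG ends).diff.comp (iota2 ends e))
    (g := - (iota2 ends e).comp (ctrG V ends e).diff) ?_
  refine Finsupp.lhom_ext' fun T => LinearMap.ext_ring ?_
  simp only [LinearMap.comp_apply, LinearMap.neg_apply, Finsupp.lsingle_apply,
    diff_single]
  have h1 : iota2 ends e (Finsupp.single T 1) = eps e T.1 • Finsupp.single (i2 ends e T) 1 := by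
    rw [iota2, LinearMap.comp_apply, sg_single, map_smul]
    exact congrArg _ Finsupp.mapDomain_single
  rw [h1, map_smul, diff_single]
  unfold dState
  refine (congrArg _ (Fin.sum_univ_succAbove _ e)).trans ?_
  have h0 : (gG ends).addEdge (i2 ends e T) e = 0 :=
    addEdge_pos (Finset.mem_insert_self _ _)
  rw [h0, smul_zero, zero_add, map_sum, Finset.smul_sum, ← Finset.sum_neg_distrib]
  refine Finset.sum_congr rfl fun k _ => ?_
  have h2 : iota2 ends e ((ctrG V ends e).addEdge T k) = eps e (insert k T.1) •
      Finsupp.mapDomain (i2 ends e) ((ctrG V ends e).addEdge T k) := by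
    rw [iota2, LinearMap.comp_apply, sg_addEdge, map_smul]
    rfl
  rw [map_smul, h2]
  refine (congrArg (fun z => eps e T.1 • _ • z) (addEdge_i2 ends e T k)).trans ?_
  by_cases hk : k ∈ T.1
  · have h3 := addEdge_pos (G := ctrG V ends e) hk
    rw [h3, Finsupp.mapDomain_zero]; simp
  · rw [smul_smul, smul_smul, ← neg_smul]
    refine congrArg₂ (· • ·) ?_ rfl
    rw [mul_comm]
    exact sign2 e T.1 k hk

theorem mem_Cmod {G : OGraph} {i j : ℕ} {x : G.EState →₀ ℤ} :
    x ∈ G.Cmod i j ↔ ∀ S, x S ≠ 0 → S.1.card = i ∧ G.jdeg S = j := by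
  unfold Cmod
  rw [Finsupp.mem_supported]
  constructor
  · intro h S hS
    exact h (Finsupp.mem_support_iff.2 hS)
  · intro h S hS
    exact h S (Finsupp.mem_support_iff.1 hS)

theorem fL_Cmod (i j : ℕ) (x) (hx : x ∈ (delG V ends e).Cmod i j) :
    fL ends e x ∈ (ctrG V ends e).Cmod i j := by
  classical
  rw [mem_Cmod] at hx
  unfold fL
  rw [Finsupp.lsum_apply, Finsupp.sum]
  refine Submodule.sum_mem _ fun S hS => ?_
  rw [LinearMap.toSpanSingleton_apply]
  refine Submodule.smul_mem _ _ ?_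
  obtain ⟨h1, h2⟩ := hx S (Finsupp.mem_support_iff.1 hS)
  unfold fS
  split_ifs with h
  · refine Finsupp.single_mem_supported _ _ ⟨h1, ?_⟩
    rw [← jdeg_i2, i2_qS, jdeg_ofPred _ _ (Finset.subset_insert e (up e S.1)) h, jdeg_i1, h2]
  · exact zero_mem _

end dc
end OGraph

/-- deletion–contraction long exact sequence. For a graph `G`
and an edge `e` of `G`, there is a long exact sequence
`0 → H^{0,j}(G) → H^{0,j}(G−e) → H^{0,j}(G/e) → H^{1,j}(G) → ⋯ →
H^{i,j}(G) → H^{i,j}(G−e) → H^{i,j}(G/e) → H^{i+1,j}(G) → ⋯`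
of graph cohomology groups, categorifying the deletion–contraction rule. -/
theorem deletion_contraction_les (V : Type) [Fintype V] {n : ℕ}
    (ends : Fin (n + 1) → Sym2 V) (e : Fin (n + 1)) :
    ∃ (β : ∀ i j : ℕ, (OGraph.mk V (n + 1) ends).Hmod i j →+ (OGraph.delG V ends e).Hmod i j)
      (γ : ∀ i j : ℕ, (OGraph.delG V ends e).Hmod i j →+ (OGraph.ctrG V ends e).Hmod i j)
      (α : ∀ i j : ℕ, (OGraph.ctrG V ends e).Hmod i j →+ (OGraph.mk V (n + 1) ends).Hmod (i + 1) j),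
      (∀ j : ℕ, Function.Injective (β 0 j)) ∧
      (∀ i j : ℕ, Function.Exact (β i j) (γ i j)) ∧
      (∀ i j : ℕ, Function.Exact (γ i j) (α i j)) ∧
      (∀ i j : ℕ, Function.Exact (α i j) (β (i + 1) j)) := by
  open OGraph in
  refine les_abstract (OGraph.mk V (n + 1) ends) (delG V ends e) (ctrG V ends e)
    (iota1 ends e) (iota2 ends e) (pi1 ends e) (pi2 ends e) (fL ends e)
    ?_ ?_ ?_ ?_ (hdec' ends e) (hd1' ends e) (hd2' ends e) (fL_chain ends e)
    ?_ ?_ ?_ ?_ ?_ (fL_Cmod ends e)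
  · intro x
    refine Finsupp.ext fun S => ?_
    rw [pi1_apply, iota1_i1]
  · intro x
    refine Finsupp.ext fun S => ?_
    rw [pi2_apply, iota2_i2]
    exact eps_mul e S.1 _
  · intro x
    refine Finsupp.ext fun S => ?_
    rw [pi1_apply, iota2_i1]; rfl
  · intro x
    refine Finsupp.ext fun S => ?_
    rw [pi2_apply, iota1_i2, mul_zero]; rfl
  · intro i j x hx
    rw [mem_Cmod] at hx ⊢
    intro W hW
    rcases i_surj ends e W with ⟨S, rfl⟩ | ⟨T, rfl⟩
    · rw [iota1_i1] at hW
      exact ⟨(up_card e S.1).trans (hx S hW).1, (jdeg_i1 ends e S).trans (hx S hW).2⟩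
    · exact absurd (iota1_i2 ends e x T) hW
  · intro i j x hx
    rw [mem_Cmod] at hx ⊢
    intro W hW
    rcases i_surj ends e W with ⟨S, rfl⟩ | ⟨T, rfl⟩
    · exact absurd (iota2_i1 ends e x S) hW
    · rw [iota2_i2] at hW
      have hT := hx T (right_ne_zero_of_mul hW)
      exact ⟨(iup_card e T.1).trans (congrArg (· + 1) hT.1), (jdeg_i2 ends e T).trans hT.2⟩
  · intro i j x hx
    rw [mem_Cmod] at hx ⊢
    intro S hS
    have h := hx (i1 ends e S) hS
    exact ⟨(up_card e S.1).symm.trans h.1, (jdeg_i1 ends e S).symm.trans h.2⟩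
  · intro i j x hx
    rw [mem_Cmod] at hx ⊢
    intro T hT
    rw [pi2_apply] at hT
    have h := hx (i2 ends e T) (right_ne_zero_of_mul hT)
    exact ⟨Nat.succ_injective ((iup_card e T.1).symm.trans h.1),
      (jdeg_i2 ends e T).symm.trans h.2⟩
  · intro j x hx
    rw [mem_Cmod] at hx
    refine Finsupp.ext fun T => ?_
    rw [pi2_apply]
    by_contra hT
    have h := hx (i2 ends e T) (right_ne_zero_of_mul hT)
    exact Nat.succ_ne_zero _ ((iup_card e T.1).symm.trans h.1)
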